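/- The outer automorphism group of S_6, i.e., the quotient of the automorphism group of S_6 by its subgroup of inner automorphisms, has order 2 (equivalently, it is isomorphic to ℤ/2ℤ). -/

import Mathlib

/-!
Two facts carry the proof.

* An automorphism of `S₆` is inner exactly when it sends `(0 1)` to a transposition
  (`mem_range_conj_iff`). If it does, all transpositions go to transpositions; the images of
  `(0 1), …, (0 5)` pairwise fail to commute, so they all share a common point `x`, and reading off
  the other points gives the conjugating permutation.
* There is an automorphism `outerAut` of order two that exchanges the transpositions with the
  products of three disjoint transpositions. It sends `(a b)` to `syntheme a b`, a bijection
  from the 15 duads (pairs of points) to the 15 synthemes (partitions into three pairs).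

An automorphism preserves the sign, so it sends `(0 1)` to an odd involution, which is
either a transposition or a product of three disjoint transpositions. In the second case composing
with `outerAut` gives an inner automorphism, so the inner automorphisms have exactly two cosets.
-/

open Equiv Equiv.Perm

/-! ### The outer automorphism -/

/-- For `a ≠ b`, the six points of the syntheme attached to the duad `{a, b}`, listed pair by pair;
for `a = b`, six zeros, so that the product of swaps in `syntheme` is trivial.
Viewing the points as the projective line over `ℤ/5` with `5 = ∞`, the syntheme of `{∞, a}` is
`(∞ a)(a+1 a-1)(a+2 a-2)` and that of `{m+d, m-d}` is `(∞ m)(m+d m-2d)(m-d m+2d)`.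
This labelling is chosen so that the resulting automorphism of `S₆` is an involution. -/
def synthemePoints : Fin 6 → Fin 6 → Fin 6 → Fin 6 :=
  ![![![0, 0, 0, 0, 0, 0], ![5, 3, 0, 4, 1, 2], ![5, 1, 0, 3, 2, 4],
      ![5, 4, 0, 2, 3, 1], ![5, 2, 0, 1, 4, 3], ![5, 0, 1, 4, 2, 3]],
    ![![5, 3, 0, 4, 1, 2], ![0, 0, 0, 0, 0, 0], ![5, 4, 1, 0, 2, 3],
      ![5, 2, 1, 4, 3, 0], ![5, 0, 1, 3, 4, 2], ![5, 1, 2, 0, 3, 4]],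
    ![![5, 1, 0, 3, 2, 4], ![5, 4, 1, 0, 2, 3], ![0, 0, 0, 0, 0, 0],
      ![5, 0, 2, 1, 3, 4], ![5, 3, 2, 0, 4, 1], ![5, 2, 3, 1, 4, 0]],
    ![![5, 4, 0, 2, 3, 1], ![5, 2, 1, 4, 3, 0], ![5, 0, 2, 1, 3, 4],
      ![0, 0, 0, 0, 0, 0], ![5, 1, 3, 2, 4, 0], ![5, 3, 4, 2, 0, 1]],
    ![![5, 2, 0, 1, 4, 3], ![5, 0, 1, 3, 4, 2], ![5, 3, 2, 0, 4, 1],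
      ![5, 1, 3, 2, 4, 0], ![0, 0, 0, 0, 0, 0], ![5, 4, 0, 3, 1, 2]],
    ![![5, 0, 1, 4, 2, 3], ![5, 1, 2, 0, 3, 4], ![5, 2, 3, 1, 4, 0],
      ![5, 3, 4, 2, 0, 1], ![5, 4, 0, 3, 1, 2], ![0, 0, 0, 0, 0, 0]]]

/-- The syntheme attached to the duad `{a, b}`, as a product of three disjoint transpositions
(and the identity if `a = b`). -/
def syntheme (a b : Fin 6) : Perm (Fin 6) :=
  swap (synthemePoints a b 0) (synthemePoints a b 1) *
    swap (synthemePoints a b 2) (synthemePoints a b 3) *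
    swap (synthemePoints a b 4) (synthemePoints a b 5)

theorem syntheme_zero_mul_syntheme : ∀ a i j : Fin 6,
    syntheme 0 a * syntheme i j = syntheme (swap 0 a i) (swap 0 a j) * syntheme 0 a := by
  decide +kernel

/-- The relations expressing `swap a b` through the transpositions `swap 0 i` hold for synthemes
as well. The last three alternatives cover the degenerate cases `b = 0`, `a = 0` and `a = b`. -/
theorem swap_and_syntheme_eq_star : ∀ a b : Fin 6,
    (swap a b = swap 0 a * swap 0 b * swap 0 a ∧
      syntheme a b = syntheme 0 a * syntheme 0 b * syntheme 0 a) ∨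
    (swap a b = swap 0 a ∧ syntheme a b = syntheme 0 a) ∨
    (swap a b = swap 0 b ∧ syntheme a b = syntheme 0 b) ∨
    (swap a b = swap 0 0 ∧ syntheme a b = syntheme 0 0) := by
  decide +kernel

/-- The duad–syntheme correspondence is an involution: the synthemes of the three duads forming
`syntheme a b` multiply to `swap a b`. -/
theorem swap_eq_syntheme_mul : ∀ a b : Fin 6,
    swap a b = syntheme (synthemePoints a b 0) (synthemePoints a b 1) *
      syntheme (synthemePoints a b 2) (synthemePoints a b 3) *
      syntheme (synthemePoints a b 4) (synthemePoints a b 5) := by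
  decide +kernel

/-- The graph of the outer automorphism: `g` acting on duads corresponds to conjugation by `h`
on their synthemes. -/
def Corresponds (g h : Perm (Fin 6)) : Prop :=
  ∀ i j, h * syntheme i j = syntheme (g i) (g j) * h

theorem Corresponds.mul {g h g' h' : Perm (Fin 6)} (H : Corresponds g h) (H' : Corresponds g' h') :
    Corresponds (g * g') (h * h') := by
  intro i j
  rw [mul_assoc, H' i j, ← mul_assoc, H, mul_assoc]
  rfl

theorem corresponds_swap (a b : Fin 6) : Corresponds (swap a b) (syntheme a b) := by
  have h : ∀ a, Corresponds (swap 0 a) (syntheme 0 a) := syntheme_zero_mul_syntheme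
  rcases swap_and_syntheme_eq_star a b with ⟨e, e'⟩ | ⟨e, e'⟩ | ⟨e, e'⟩ | ⟨e, e'⟩ <;> rw [e, e']
  · exact ((h a).mul (h b)).mul (h a)
  · exact h a
  · exact h b
  · exact h 0

theorem eq_one_of_commute_swap {k : Perm (Fin 6)} (hk : ∀ a b, Commute k (swap a b)) : k = 1 := by
  ext1 a
  by_contra hne
  replace hne : k a ≠ a := hne
  obtain ⟨b, hba, hbk⟩ : ∃ b, b ≠ a ∧ b ≠ k a := by
    have h : ∀ a c : Fin 6, ∃ b, b ≠ a ∧ b ≠ c := by decide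
    exact h a (k a)
  have h : swap (k a) (k b) = swap a b :=
    mul_right_cancel ((mul_swap_eq_swap_mul k a b).symm.trans (hk a b).eq)
  have h2 := congrArg (fun s => s (k a)) h
  simp only [swap_apply_left, swap_apply_of_ne_of_ne hne hbk.symm] at h2
  exact hba (k.injective h2)

/-- A permutation centralizing all synthemes centralizes all transpositions, which are products of
synthemes; so the correspondent of `g` is unique. -/
theorem Corresponds.unique {g h h' : Perm (Fin 6)} (H : Corresponds g h) (H' : Corresponds g h') :
    h = h' := by
  have hc : ∀ i j, Commute (h'⁻¹ * h) (syntheme i j) := by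
    intro i j
    have h1 : syntheme (g i) (g j) = h' * syntheme i j * h'⁻¹ := by
      rw [H' i j, mul_inv_cancel_right]
    rw [Commute, SemiconjBy, mul_assoc, H i j, h1]
    group
  have h1 : h'⁻¹ * h = 1 := eq_one_of_commute_swap fun a b => by
    rw [swap_eq_syntheme_mul a b]
    exact ((hc _ _).mul_right (hc _ _)).mul_right (hc _ _)
  exact (inv_mul_eq_one.mp h1).symm

theorem exists_corresponds (g : Perm (Fin 6)) : ∃ h, Corresponds g h := by
  induction g using swap_induction_on with
  | one => exact ⟨1, fun i j => by simp⟩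
  | swap_mul f x y _ ih =>
    obtain ⟨h, hh⟩ := ih
    exact ⟨syntheme x y * h, Corresponds.mul (corresponds_swap x y) hh⟩

/-- The outer automorphism of `S₆`, as an endomorphism. -/
noncomputable def outerHom : Perm (Fin 6) →* Perm (Fin 6) :=
  MonoidHom.mk' (fun g => (exists_corresponds g).choose) fun a b =>
    (exists_corresponds (a * b)).choose_spec.unique
      ((exists_corresponds a).choose_spec.mul (exists_corresponds b).choose_spec)

theorem outerHom_swap (a b : Fin 6) : outerHom (swap a b) = syntheme a b :=
  (exists_corresponds (swap a b)).choose_spec.unique (corresponds_swap a b)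

theorem outerHom_syntheme (a b : Fin 6) : outerHom (syntheme a b) = swap a b := by
  rw [swap_eq_syntheme_mul a b, syntheme, map_mul, map_mul]
  simp only [outerHom_swap]

theorem hom_ext_swap {G : Type*} [Group G] {f f' : Perm (Fin 6) →* G}
    (h : ∀ a b, f (swap a b) = f' (swap a b)) : f = f' := by
  refine MonoidHom.eq_of_eqOn_dense closure_isSwap ?_
  rintro _ ⟨a, b, -, rfl⟩
  exact h a b

theorem outerHom_comp_outerHom : outerHom.comp outerHom = MonoidHom.id _ :=
  hom_ext_swap fun a b => by simp [outerHom_swap, outerHom_syntheme]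

/-- The outer automorphism of `S₆` sending `swap a b` to `syntheme a b`. -/
noncomputable def outerAut : MulAut (Perm (Fin 6)) :=
  MonoidHom.toMulEquiv outerHom outerHom outerHom_comp_outerHom outerHom_comp_outerHom

theorem outerAut_swap (a b : Fin 6) : outerAut (swap a b) = syntheme a b := outerHom_swap a b

theorem outerAut_syntheme (a b : Fin 6) : outerAut (syntheme a b) = swap a b :=
  outerHom_syntheme a b

/-! ### Odd involutions -/

theorem isSwap_swap_zero_one : (swap 0 1 : Perm (Fin 6)).IsSwap := ⟨0, 1, by decide, rfl⟩

/-- Since `sign` is the only surjective homomorphism onto `ℤˣ`, it is preserved by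
automorphisms. -/
theorem sign_mulAut (φ : MulAut (Perm (Fin 6))) (g : Perm (Fin 6)) : sign (φ g) = sign g := by
  have h : (sign : Perm (Fin 6) →* ℤˣ).comp φ.toMonoidHom = sign :=
    eq_sign_of_surjective_hom ((sign_surjective (Fin 6)).comp φ.surjective)
  exact DFunLike.congr_fun h g

theorem cycleType_of_odd_involution {s : Perm (Fin 6)} (h2 : s ^ 2 = 1) (hs : sign s = -1) :
    s.cycleType = {2} ∨ s.cycleType = {2, 2, 2} := by
  have hr : s.cycleType = Multiset.replicate s.cycleType.card 2 :=
    Multiset.eq_replicate.mpr ⟨rfl, pow_prime_eq_one_iff.mp h2⟩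
  have hle := s.sum_cycleType_le
  rw [sign_of_cycleType] at hs
  generalize Multiset.card s.cycleType = n at hr
  rw [hr] at hs hle ⊢
  simp only [Multiset.sum_replicate, Fintype.card_fin, smul_eq_mul] at hle
  have hn : n ≤ 3 := by omega
  interval_cases n
  · simp at hs
  · exact Or.inl rfl
  · exact absurd hs (by decide)
  · exact Or.inr rfl

theorem cycleType_syntheme_zero_one : (syntheme 0 1).cycleType = {2, 2, 2} := by
  refine (cycleType_of_odd_involution (by decide) (by decide)).resolve_left fun h => ?_
  have h1 := sum_cycleType (syntheme 0 1)
  rw [h] at h1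
  revert h1
  decide

theorem isConj_of_isSwap {s t : Perm (Fin 6)} (hs : s.IsSwap) (ht : t.IsSwap) : IsConj s t :=
  isConj_iff_cycleType_eq.mpr
    ((isSwap_iff_cycleType.mp hs).trans (isSwap_iff_cycleType.mp ht).symm)

theorem isSwap_of_isConj {s t : Perm (Fin 6)} (h : IsConj s t) (hs : s.IsSwap) : t.IsSwap :=
  isSwap_iff_cycleType.mpr
    ((isConj_iff_cycleType_eq.mp h).symm.trans (isSwap_iff_cycleType.mp hs))

theorem not_isSwap_of_isConj_syntheme {s : Perm (Fin 6)} (h : IsConj (syntheme 0 1) s) :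
    ¬ s.IsSwap := by
  rw [isSwap_iff_cycleType, ← isConj_iff_cycleType_eq.mp h, cycleType_syntheme_zero_one]
  decide

/-- The image of a transposition under an automorphism is a transposition or a product of three
disjoint transpositions. -/
theorem isSwap_or_isConj_syntheme (φ : MulAut (Perm (Fin 6))) :
    (φ (swap 0 1)).IsSwap ∨ IsConj (syntheme 0 1) (φ (swap 0 1)) := by
  have h2 : φ (swap 0 1) ^ 2 = 1 := by rw [← map_pow, sq, swap_mul_self, map_one]
  have hs : sign (φ (swap 0 1)) = -1 := by rw [sign_mulAut]; exact sign_swap (by decide)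
  refine (cycleType_of_odd_involution h2 hs).imp isSwap_iff_cycleType.mpr fun h => ?_
  exact isConj_iff_cycleType_eq.mpr (cycleType_syntheme_zero_one.trans h.symm)

/-! ### Automorphisms preserving transpositions are inner -/

theorem commute_swap_of_disjoint {a b c d : Fin 6} (hac : a ≠ c) (had : a ≠ d) (hbc : b ≠ c)
    (hbd : b ≠ d) : Commute (swap a b) (swap c d) := by
  rw [Commute, SemiconjBy, mul_swap_eq_swap_mul,
    swap_apply_of_ne_of_ne hac.symm hbc.symm, swap_apply_of_ne_of_ne had.symm hbd.symm]

theorem exists_eq_swap_of_not_commute {x y : Fin 6} {t : Perm (Fin 6)} (ht : t.IsSwap)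
    (h : ¬ Commute (swap x y) t) :
    (∃ w, w ≠ x ∧ t = swap x w) ∨ ∃ w, w ≠ y ∧ t = swap y w := by
  obtain ⟨c, d, hcd, rfl⟩ := ht
  by_cases h1 : x = c
  · exact Or.inl ⟨d, h1 ▸ hcd.symm, by rw [h1]⟩
  by_cases h2 : x = d
  · exact Or.inl ⟨c, h2 ▸ hcd, by rw [h2, swap_comm]⟩
  by_cases h3 : y = c
  · exact Or.inr ⟨d, h3 ▸ hcd.symm, by rw [h3]⟩
  by_cases h4 : y = d
  · exact Or.inr ⟨c, h4 ▸ hcd, by rw [h4, swap_comm]⟩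
  exact absurd (commute_swap_of_disjoint h1 h2 h3 h4) h

theorem not_commute_swap_zero : ∀ i j : Fin 6, i ≠ 0 → j ≠ 0 → i ≠ j →
    ¬ Commute (swap 0 i) (swap 0 j) := by
  unfold Commute SemiconjBy
  decide

/-- The transpositions `φ (swap 0 i)` all move a common point `x`. -/
theorem exists_common_point (φ : MulAut (Perm (Fin 6)))
    (hφ : ∀ a b, a ≠ b → (φ (swap a b)).IsSwap) :
    ∃ x, ∀ i, i ≠ 0 → ∃ w, w ≠ x ∧ φ (swap 0 i) = swap x w := by
  have hnc : ∀ i j, i ≠ 0 → j ≠ 0 → i ≠ j → ¬ Commute (φ (swap 0 i)) (φ (swap 0 j)) := by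
    intro i j hi hj hij hc
    refine not_commute_swap_zero i j hi hj hij (φ.injective ?_)
    rw [map_mul, map_mul]
    exact hc
  -- The point `x` is the one shared by the images of `(0 1)` and `(0 2)`.
  obtain ⟨x, y, z, hxy, hxz, h1, h2⟩ : ∃ x y z, y ≠ x ∧ z ≠ x ∧
      φ (swap 0 1) = swap x y ∧ φ (swap 0 2) = swap x z := by
    obtain ⟨p, q, hpq, h1⟩ := hφ 0 1 (by decide)
    have hc := hnc 1 2 (by decide) (by decide) (by decide)
    rw [h1] at hc
    rcases exists_eq_swap_of_not_commute (hφ 0 2 (by decide)) hc with ⟨w, hw, h⟩ | ⟨w, hw, h⟩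
    · exact ⟨p, q, w, hpq.symm, hw, h1, h⟩
    · exact ⟨q, p, w, hpq, hw, h1.trans (swap_comm p q), h⟩
  have hyz : y ≠ z := by
    rintro rfl
    exact absurd (φ.injective (h1.trans h2.symm)) (by decide)
  have h12 : φ (swap 1 2) = swap y z := by
    have e : (swap 1 2 : Perm (Fin 6)) = swap 0 1 * swap 0 2 * swap 0 1 := by decide
    rw [e, map_mul, map_mul, h1, h2, swap_comm x z,
      swap_mul_swap_mul_swap hxz hyz.symm]
  refine ⟨x, fun i hi => ?_⟩
  by_cases hi1 : i = 1
  · exact ⟨y, hxy, hi1 ▸ h1⟩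
  by_cases hi2 : i = 2
  · exact ⟨z, hxz, hi2 ▸ h2⟩
  have c1 := hnc 1 i (by decide) hi (Ne.symm hi1)
  have c2 := hnc 2 i (by decide) hi (Ne.symm hi2)
  rw [h1] at c1
  rw [h2] at c2
  have hsw := hφ 0 i (Ne.symm hi)
  rcases exists_eq_swap_of_not_commute hsw c1 with h | ⟨w, hw, h⟩
  · exact h
  rcases exists_eq_swap_of_not_commute hsw c2 with hz | ⟨w', hw', hz⟩
  · exact hz
  -- Otherwise `φ (swap 0 i)` moves both `y` and `z`, so it is `swap y z = φ (swap 1 2)`.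
  have hw_eq : w = z := by
    by_contra hne
    have e := congrArg (fun s => s z) (h.symm.trans hz)
    simp only [swap_apply_left, swap_apply_of_ne_of_ne hyz.symm (Ne.symm hne)] at e
    exact hw' e.symm
  rw [hw_eq, ← h12] at h
  have h0 : (swap 0 i : Perm (Fin 6)) = swap 1 2 := φ.injective h
  have e := congrArg (fun s => s 0) h0
  rw [swap_apply_left, swap_apply_of_ne_of_ne (by decide) (by decide)] at e
  exact absurd e hi

theorem mem_range_conj_of_isSwap (φ : MulAut (Perm (Fin 6)))
    (hφ : ∀ a b, a ≠ b → (φ (swap a b)).IsSwap) :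
    φ ∈ (MulAut.conj : Perm (Fin 6) →* MulAut (Perm (Fin 6))).range := by
  obtain ⟨x, hx⟩ := exists_common_point φ hφ
  -- Allowing `i = 0` with `w 0 = x` makes `w` the conjugating permutation itself.
  have hx' : ∀ i, ∃ w, (i ≠ 0 → w ≠ x) ∧ φ (swap 0 i) = swap x w := by
    intro i
    by_cases hi : i = 0
    · exact ⟨x, fun h => absurd hi h, by rw [hi, swap_self, swap_self]; exact map_one φ⟩
    · obtain ⟨w, hw, h⟩ := hx i hi
      exact ⟨w, fun _ => hw, h⟩
  choose w hwx hw using hx'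
  have hinj : Function.Injective w := by
    intro i j hij
    have h : (swap 0 i : Perm (Fin 6)) = swap 0 j :=
      φ.injective (by rw [hw, hw, hij])
    simpa using congrArg (fun s => s 0) h
  have hw0 : w 0 = x := by
    have h := hw 0
    rw [swap_self] at h
    have h' : (1 : Perm (Fin 6)) = swap x (w 0) := (map_one φ).symm.trans h
    simpa using (congrArg (fun s => s x) h').symm
  let g : Perm (Fin 6) := Equiv.ofBijective w (Finite.injective_iff_bijective.mp hinj)
  have hg : ∀ i, φ (swap 0 i) = MulAut.conj g (swap 0 i) := by
    intro i
    rw [MulAut.conj_apply, ← swap_apply_apply, hw i, ← hw0]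
    rfl
  refine ⟨g, ?_⟩
  have hhom : (MulAut.conj g).toMonoidHom = φ.toMonoidHom := by
    refine hom_ext_swap fun a b => ?_
    change MulAut.conj g (swap a b) = φ (swap a b)
    rcases swap_and_syntheme_eq_star a b with ⟨e, -⟩ | ⟨e, -⟩ | ⟨e, -⟩ | ⟨e, -⟩ <;>
      rw [e] <;> simp only [map_mul, hg]
  exact MulEquiv.toMonoidHom_injective hhom

theorem mem_range_conj_iff (φ : MulAut (Perm (Fin 6))) :
    φ ∈ (MulAut.conj : Perm (Fin 6) →* MulAut (Perm (Fin 6))).range ↔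
      (φ (swap 0 1)).IsSwap := by
  constructor
  · rintro ⟨g, rfl⟩
    exact isSwap_of_isConj (isConj_iff.mpr ⟨g, rfl⟩) isSwap_swap_zero_one
  · intro h
    refine mem_range_conj_of_isSwap φ fun a b hab => isSwap_of_isConj ?_ h
    exact φ.toMonoidHom.map_isConj (isConj_of_isSwap isSwap_swap_zero_one ⟨a, b, hab, rfl⟩)

theorem out_S6_has_order_two :
    ((MulAut.conj : Equiv.Perm (Fin 6) →* MulAut (Equiv.Perm (Fin 6))).range).index = 2 := by
  rw [Subgroup.index_eq_two_iff']
  refine ⟨outerAut, fun φ => ?_⟩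
  rw [mem_range_conj_iff, mem_range_conj_iff, MulAut.mul_apply]
  rcases isSwap_or_isConj_syntheme φ with h | h
  · refine Or.inr ⟨h, not_isSwap_of_isConj_syntheme ?_⟩
    rw [← outerAut_swap]
    exact outerAut.toMonoidHom.map_isConj (isConj_of_isSwap isSwap_swap_zero_one h)
  · have hc : IsConj (outerAut (syntheme 0 1)) (outerAut (φ (swap 0 1))) :=
      outerAut.toMonoidHom.map_isConj h
    rw [outerAut_syntheme] at hc
    exact Or.inl ⟨isSwap_of_isConj hc isSwap_swap_zero_one, not_isSwap_of_isConj_syntheme h⟩
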